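/- Time-reversal symmetry of the quantum weights for eigenvectors: let H be a complex Hilbert space, U a unitary operator on H, P_1, …, P_K self-adjoint bounded operators on H, and ψ ∈ H a vector with Uψ = λψ for some scalar λ with |λ| = 1. For n ≥ 1 and α = (α_0,…,α_{n-1}) ∈ {1,…,K}^n let P_α = P_{α_{n-1}}(n−1)⋯P_{α_1}(1)·P_{α_0} with A(t) = U^{−t}AU^{t}, and let Q_β = P̃_{β_{n-1}}(n−1)⋯P̃_{β_1}(1)·P_{β_0} be the analogous product built with U^{−1} in place of U (i.e. Ã(t) = U^{t}AU^{−t}). Then for every α, ‖P_α* ψ‖ = ‖Q_{ᾱ} ψ‖, where ᾱ = (α_{n-1},…,α_0) is the reversed word. -/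

import Mathlib

open Finset

/-- Heisenberg evolution of an operator `A` at (nonnegative integer) time `t` under a
unitary `U`: `A(t) = U^{-t} A U^{t}`, with `U^{-1} = star U`. -/
noncomputable def heis {H : Type*} [NormedAddCommGroup H] [InnerProductSpace ℂ H]
    [CompleteSpace H] (U : H →L[ℂ] H) (A : H →L[ℂ] H) (t : ℕ) : H →L[ℂ] H :=
  ((star U) ^ t) ∘L A ∘L (U ^ t)

/-- Refined quantum partition: for a word `α = (α_0, …, α_{n-1})`,
`P_α = P_{α_{n-1}}(n-1) ⋯ P_{α_1}(1) · P_{α_0}`. -/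
noncomputable def Pword {H : Type*} [NormedAddCommGroup H] [InnerProductSpace ℂ H]
    [CompleteSpace H] {K : ℕ} (U : H →L[ℂ] H) (P : Fin K → H →L[ℂ] H) :
    (n : ℕ) → (Fin n → Fin K) → (H →L[ℂ] H)
  | 0, _ => 1
  | n + 1, α => heis U (P (α (Fin.last n))) n ∘L Pword U P n (fun j => α j.castSucc)

/-!
Writing `V = star U`, the powers in `P_α` telescope:
`U ^ n * P_α = (U * P_{α_{n-1}}) * ⋯ * (U * P_{α_0})`. Taking adjoints gives
`star P_α * V ^ n = (star P_{α_0} * V) * ⋯ * (star P_{α_{n-1}} * V)`, while the same telescoping for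
the word operator `Q` built from `V`, the `star P_k` and the reversed word gives
`V ^ n * Q = (V * star P_{α_0}) * ⋯ * (V * star P_{α_{n-1}})`. The two products differ only by
moving one factor `V` from one end to the other, so `V ^ n * Q * V = V * star P_α * V ^ n`. On an
eigenvector, each outer `V` acts by a phase or as an isometry and does not affect norms.
-/

section ListProd

variable {ι M : Type*}

theorem mul_prod_map_mul_right [Monoid M] (a : M) (f : ι → M) (l : List ι) :
    a * (l.map fun i ↦ f i * a).prod = (l.map fun i ↦ a * f i).prod * a := by
  induction l with
  | nil => simp
  | cons i l ih =>
    simp only [List.map_cons, List.prod_cons, mul_assoc, ih]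

theorem star_list_prod [Monoid M] [StarMul M] (l : List M) :
    star l.prod = (l.map star).reverse.prod := by
  induction l with
  | nil => simp
  | cons a l ih => simp [ih]

theorem list_ofFn_rev {n : ℕ} (f : Fin n → ι) :
    (List.ofFn fun j ↦ f j.rev) = (List.ofFn f).reverse := by
  apply List.ext_getElem
  · simp
  · intro i _ _
    simp [Fin.rev, Nat.sub_sub, add_comm]

end ListProd

section Eigenvector

variable {𝕜 E F : Type*} [AddCommMonoid E] [TopologicalSpace E]

theorem apply_eq_inv_smul_of_mul_eq_one [DivisionRing 𝕜] [Module 𝕜 E] {U V : E →L[𝕜] E}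
    (hVU : V * U = 1) {c : 𝕜} (hc : c ≠ 0) {x : E} (hx : U x = c • x) : V x = c⁻¹ • x := by
  rw [eq_inv_smul_iff₀ hc, ← map_smul, ← hx, ← mul_apply_eq_comp, hVU, one_apply_eq_self]

theorem pow_apply_eq_pow_smul [Semiring 𝕜] [Module 𝕜 E] {V : E →L[𝕜] E} {c : 𝕜} {x : E}
    (hx : V x = c • x) (m : ℕ) : (V ^ m) x = c ^ m • x := by
  induction m with
  | zero => simp
  | succ m ih => rw [pow_succ, mul_apply_eq_comp, hx, map_smul, ih, smul_smul, pow_succ']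

theorem norm_apply_smul_of_norm_eq_one [NormedField 𝕜] [Module 𝕜 E] [SeminormedAddCommGroup F]
    [NormedSpace 𝕜 F] (A : E →L[𝕜] F) {c : 𝕜} (hc : ‖c‖ = 1) (x : E) : ‖A (c • x)‖ = ‖A x‖ := by
  rw [map_smul, norm_smul, hc, one_mul]

end Eigenvector

section Pword

variable {H : Type*} [NormedAddCommGroup H] [InnerProductSpace ℂ H] [CompleteSpace H] {K : ℕ}

theorem pow_mul_Pword {U : H →L[ℂ] H} (hU : U * star U = 1) (P : Fin K → H →L[ℂ] H) (n : ℕ)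
    (α : Fin n → Fin K) :
    U ^ n * Pword U P n α = ((List.ofFn α).reverse.map fun k ↦ U * P k).prod := by
  induction n with
  | zero => simp [Pword]
  | succ n ih =>
    have hcancel : U ^ n * star U ^ n = 1 := pow_mul_pow_eq_one n hU
    calc U ^ (n + 1) * Pword U P (n + 1) α
        = U * (U ^ n * star U ^ n) * P (α (Fin.last n)) *
            (U ^ n * Pword U P n fun j ↦ α j.castSucc) := by
          simp only [Pword, heis, ← ContinuousLinearMap.mul_def, pow_succ', mul_assoc]
      _ = ((List.ofFn α).reverse.map fun k ↦ U * P k).prod := by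
          rw [hcancel, ih, List.ofFn_succ_last]
          simp [mul_assoc]

theorem star_pow_mul_Pword_star_rev_mul_star {U : H →L[ℂ] H} (hU : U ∈ unitary (H →L[ℂ] H))
    (P : Fin K → H →L[ℂ] H) (n : ℕ) (α : Fin n → Fin K) :
    star U ^ n * Pword (star U) (fun k ↦ star (P k)) n (fun j ↦ α j.rev) * star U =
      star U * star (Pword U P n α) * star U ^ n := by
  have hstar : star U * star (star U) = 1 := by rw [star_star, Unitary.star_mul_self_of_mem hU]
  calc star U ^ n * Pword (star U) (fun k ↦ star (P k)) n (fun j ↦ α j.rev) * star U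
      = ((List.ofFn α).map fun k ↦ star U * star (P k)).prod * star U := by
        rw [pow_mul_Pword hstar, list_ofFn_rev, List.reverse_reverse]
    _ = star U * ((List.ofFn α).map fun k ↦ star (P k) * star U).prod :=
        (mul_prod_map_mul_right _ _ _).symm
    _ = star U * star ((List.ofFn α).reverse.map fun k ↦ U * P k).prod := by
        simp only [star_list_prod, List.map_reverse, List.reverse_reverse, List.map_map,
          Function.comp_def, star_mul]
    _ = star U * star (Pword U P n α) * star U ^ n := by
        rw [← pow_mul_Pword (Unitary.mul_star_self_of_mem hU), star_mul, star_pow, mul_assoc]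

theorem time_reversal_symmetry_of_weights_general {U : H →L[ℂ] H}
    (hU : U ∈ unitary (H →L[ℂ] H)) (P : Fin K → H →L[ℂ] H) {ψ : H} {lam : ℂ} (hlam : ‖lam‖ = 1)
    (heig : U ψ = lam • ψ) (n : ℕ) (α : Fin n → Fin K) :
    ‖ContinuousLinearMap.adjoint (Pword U P n α) ψ‖ =
      ‖Pword (star U) (fun k ↦ star (P k)) n (fun j ↦ α j.rev) ψ‖ := by
  set Q := Pword (star U) (fun k ↦ star (P k)) n (fun j ↦ α j.rev)
  have hstar : star U ∈ unitary (H →L[ℂ] H) := Unitary.star_mem hU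
  have hinv : ‖lam⁻¹‖ = 1 := by rw [norm_inv, hlam, inv_one]
  have heig_star : star U ψ = lam⁻¹ • ψ :=
    apply_eq_inv_smul_of_mul_eq_one (Unitary.star_mul_self_of_mem hU)
      (norm_ne_zero_iff.mp (hlam ▸ one_ne_zero)) heig
  calc ‖star (Pword U P n α) ψ‖
      = ‖star (Pword U P n α) ((star U ^ n) ψ)‖ := by
        rw [pow_apply_eq_pow_smul heig_star,
          norm_apply_smul_of_norm_eq_one _ (by rw [norm_pow, hinv, one_pow])]
    _ = ‖(star U * star (Pword U P n α) * star U ^ n) ψ‖ :=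
        (ContinuousLinearMap.norm_map_of_mem_unitary hstar _).symm
    _ = ‖(star U ^ n * Q * star U) ψ‖ := by rw [star_pow_mul_Pword_star_rev_mul_star hU]
    _ = ‖Q (star U ψ)‖ := ContinuousLinearMap.norm_map_of_mem_unitary (pow_mem hstar n) _
    _ = ‖Q ψ‖ := by rw [heig_star, norm_apply_smul_of_norm_eq_one _ hinv]

end Pword

/-- Time-reversal symmetry of the quantum weights for eigenvectors: the word
operators built from `U⁻¹ = star U` are denoted `Q_β = Pword (star U) P n β`, and
`ᾱ = α ∘ Fin.rev` is the reversed word. -/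
theorem time_reversal_symmetry_of_weights
    {H : Type*} [NormedAddCommGroup H] [InnerProductSpace ℂ H] [CompleteSpace H]
    {K : ℕ}
    (U : H →L[ℂ] H) (hU : U ∈ unitary (H →L[ℂ] H))
    (P : Fin K → H →L[ℂ] H) (hsa : ∀ k, IsSelfAdjoint (P k))
    (ψ : H) (lam : ℂ) (hlam : ‖lam‖ = 1) (heig : U ψ = lam • ψ)
    (n : ℕ) (hn : 1 ≤ n) (α : Fin n → Fin K) :
    ‖ContinuousLinearMap.adjoint (Pword U P n α) ψ‖ =
      ‖Pword (star U) P n (fun j => α j.rev) ψ‖ := by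
  simpa only [(hsa _).star_eq] using
    time_reversal_symmetry_of_weights_general hU P hlam heig n α
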